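/- arXiv:1508.03960 — 2 statements merged into one kernel-verified Lean document; each statement's English description precedes it below -/
import Mathlib

section
/- Let a, b, c, d, p, q and a', b', c', d', p', q' be points of Euclidean 3-space ℝ³. Suppose that every pairwise distance among the five points {a, b, c, p, q} equals the distance of the corresponding pair among {a', b', c', p', q'}, that every pairwise distance among the five points {a, b, d, p, q} equals the distance of the corresponding pair among {a', b', d', p', q'}, and that the four points a, b, p, q are affinely independent. Then dist(c, d) = dist(c', d'); consequently all fifteen pairwise distances among {a, b, c, d, p, q} equal the corresponding primed distances, and the two six-point configurations are congruent. -/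
/-!
The first five-point congruence is induced by an isometry `f` of the ambient space, the second one
by an isometry `g`: equal distances give equal Gram matrices of the difference vectors, so the
linear map between their spans is well defined and isometric, and it extends to the whole space.
Since `f` and `g` agree on `a, b, p, q`, they agree on the affine span of these points, which
contains `c`. Hence `g` alone carries all six points to the primed ones.
-/

open scoped Congruent

section Linear

theorem exists_linearIsometry_range_of_norm_eq {𝕜 M E F : Type*} [NormedField 𝕜]
    [AddCommGroup M] [Module 𝕜 M] [SeminormedAddCommGroup E] [NormedSpace 𝕜 E]
    [NormedAddCommGroup F] [NormedSpace 𝕜 F] (f : M →ₗ[𝕜] E) (g : M →ₗ[𝕜] F)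
    (h : ∀ m, ‖f m‖ = ‖g m‖) :
    ∃ L : f.range →ₗᵢ[𝕜] F, ∀ m, L (f.rangeRestrict m) = g m := by
  obtain ⟨s, hs⟩ := f.rangeRestrict.exists_rightInverse_of_surjective f.range_rangeRestrict
  have f_s (x : f.range) : f (s x) = x := congrArg Subtype.val (LinearMap.congr_fun hs x)
  refine ⟨⟨g ∘ₗ s, fun x ↦ ?_⟩, fun m ↦ ?_⟩
  · calc ‖g (s x)‖ = ‖f (s x)‖ := (h _).symm
      _ = ‖x‖ := by rw [f_s, Submodule.coe_norm]
  · have : ‖g (s (f.rangeRestrict m) - m)‖ = 0 := by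
      rw [← h, map_sub, f_s, LinearMap.codRestrict_apply, sub_self, norm_zero]
    rwa [norm_eq_zero, map_sub, sub_eq_zero] at this

variable {𝕜 E F ι : Type*} [RCLike 𝕜]
  [SeminormedAddCommGroup E] [InnerProductSpace 𝕜 E]
  [SeminormedAddCommGroup F] [InnerProductSpace 𝕜 F]

theorem norm_linearCombination_eq_of_gram_eq {u : ι → E} {v : ι → F}
    (h : Matrix.gram 𝕜 u = Matrix.gram 𝕜 v) (l : ι →₀ 𝕜) :
    ‖Finsupp.linearCombination 𝕜 u l‖ = ‖Finsupp.linearCombination 𝕜 v l‖ := by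
  have inner_eq (i j : ι) : inner 𝕜 (u i) (u j) = inner 𝕜 (v i) (v j) := congrFun₂ h i j
  simp only [@norm_eq_sqrt_re_inner 𝕜, Finsupp.linearCombination_apply, Finsupp.sum_inner,
    Finsupp.inner_sum, inner_smul_left, inner_smul_right, inner_eq]

theorem exists_linearIsometryEquiv_of_gram_eq {V : Type*} [NormedAddCommGroup V]
    [InnerProductSpace 𝕜 V] [FiniteDimensional 𝕜 V] {u v : ι → V}
    (h : Matrix.gram 𝕜 u = Matrix.gram 𝕜 v) : ∃ L : V ≃ₗᵢ[𝕜] V, ∀ i, L (u i) = v i := by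
  obtain ⟨L, hL⟩ := exists_linearIsometry_range_of_norm_eq (Finsupp.linearCombination 𝕜 u)
    (Finsupp.linearCombination 𝕜 v) (norm_linearCombination_eq_of_gram_eq h)
  refine ⟨L.extend.toLinearIsometryEquiv rfl, fun i ↦ ?_⟩
  simpa [← L.extend_apply] using hL (Finsupp.single i 1)

end Linear

section Affine

variable {V P ι : Type*} [NormedAddCommGroup V] [InnerProductSpace ℝ V]
  [MetricSpace P] [NormedAddTorsor V P]

theorem gram_vsub_eq_of_congruent {V' P' : Type*} [NormedAddCommGroup V'] [InnerProductSpace ℝ V']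
    [MetricSpace P'] [NormedAddTorsor V' P'] {v : ι → P} {v' : ι → P'} (h : v ≅ v') (i₀ : ι) :
    Matrix.gram ℝ (fun i ↦ v i -ᵥ v i₀) = Matrix.gram ℝ (fun i ↦ v' i -ᵥ v' i₀) := by
  ext i j
  simp only [Matrix.gram_apply,
    real_inner_eq_norm_mul_self_add_norm_mul_self_sub_norm_sub_mul_self_div_two,
    vsub_sub_vsub_cancel_right, ← dist_eq_norm_vsub, h.dist_eq]

variable [FiniteDimensional ℝ V]

theorem exists_affineIsometryEquiv_of_congruent {v v' : ι → P} (h : v ≅ v') :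
    ∃ f : P ≃ᵃⁱ[ℝ] P, ∀ i, f (v i) = v' i := by
  cases isEmpty_or_nonempty ι with
  | inl _ => exact ⟨.refl ℝ P, isEmptyElim⟩
  | inr hι =>
    obtain ⟨i₀⟩ := hι
    obtain ⟨L, hL⟩ := exists_linearIsometryEquiv_of_gram_eq (gram_vsub_eq_of_congruent h i₀)
    refine ⟨(AffineIsometryEquiv.vaddConst ℝ (v i₀)).symm.trans
      (L.toAffineIsometryEquiv.trans (.vaddConst ℝ (v' i₀))), fun i ↦ ?_⟩
    simp [hL]

theorem stmt_8_general {a b c d p q a' b' c' d' p' q' : P}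
    (h₁ : ![a, b, c, p, q] ≅ ![a', b', c', p', q'])
    (h₂ : ![a, b, d, p, q] ≅ ![a', b', d', p', q'])
    (hc : c ∈ affineSpan ℝ (Set.range ![a, b, p, q])) :
    dist c d = dist c' d' ∧
    (![a, b, c, d, p, q] ≅ ![a', b', c', d', p', q']) ∧
    ∃ f : P ≃ᵃⁱ[ℝ] P, f a = a' ∧ f b = b' ∧ f c = c' ∧ f d = d' ∧ f p = p' ∧ f q = q' := by
  obtain ⟨f, hf⟩ := exists_affineIsometryEquiv_of_congruent h₁
  obtain ⟨g, hg⟩ := exists_affineIsometryEquiv_of_congruent h₂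
  have g_eq_f : (Set.range ![a, b, p, q]).EqOn g f := by
    rw [Set.eqOn_range]
    ext i
    fin_cases i
    exacts [(hg 0).trans (hf 0).symm, (hg 1).trans (hf 1).symm, (hg 3).trans (hf 3).symm,
      (hg 4).trans (hf 4).symm]
  have g_c : g c = c' :=
    (AffineMap.eqOn_affineSpan (f := (g : P →ᵃ[ℝ] P)) (g := (f : P →ᵃ[ℝ] P)) g_eq_f hc).trans (hf 2)
  have g_map : g ∘ ![a, b, c, d, p, q] = ![a', b', c', d', p', q'] := by
    ext i
    fin_cases i
    exacts [hg 0, hg 1, g_c, hg 2, hg 3, hg 4]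
  have hcongr : ![a, b, c, d, p, q] ≅ ![a', b', c', d', p', q'] :=
    g_map ▸ (Congruent.refl _).comp_right g.isometry
  exact ⟨hcongr.dist_eq 2 3, hcongr, g, hg 0, hg 1, g_c, hg 2, hg 3, hg 4⟩

end Affine

/-- If the five-point configurations `{a,b,c,p,q}` and `{a,b,d,p,q}` have the same
pairwise distances as the corresponding primed configurations, and `a, b, p, q` are
affinely independent, then `dist c d = dist c' d'`; consequently all fifteen pairwise
distances among `{a,b,c,d,p,q}` equal the corresponding primed distances and the two
six-point configurations are congruent. -/
theorem stmt_8 (a b c d p q a' b' c' d' p' q' : EuclideanSpace ℝ (Fin 3))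
    (h₁ : ∀ i j : Fin 5,
      dist (![a, b, c, p, q] i) (![a, b, c, p, q] j) =
        dist (![a', b', c', p', q'] i) (![a', b', c', p', q'] j))
    (h₂ : ∀ i j : Fin 5,
      dist (![a, b, d, p, q] i) (![a, b, d, p, q] j) =
        dist (![a', b', d', p', q'] i) (![a', b', d', p', q'] j))
    (habpq : AffineIndependent ℝ ![a, b, p, q]) :
    dist c d = dist c' d' ∧
    (∀ i j : Fin 6,
      dist (![a, b, c, d, p, q] i) (![a, b, c, d, p, q] j) =
        dist (![a', b', c', d', p', q'] i) (![a', b', c', d', p', q'] j)) ∧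
    ∃ f : EuclideanSpace ℝ (Fin 3) ≃ᵢ EuclideanSpace ℝ (Fin 3),
      f a = a' ∧ f b = b' ∧ f c = c' ∧ f d = d' ∧ f p = p' ∧ f q = q' := by
  have span_eq_top : affineSpan ℝ (Set.range ![a, b, p, q]) = ⊤ :=
    habpq.affineSpan_eq_top_iff_card_eq_finrank_add_one.2 (by simp)
  obtain ⟨hcd, hcongr, f, hf⟩ := stmt_8_general (congruent_iff_dist_eq.2 h₁)
    (congruent_iff_dist_eq.2 h₂) (span_eq_top ▸ AffineSubspace.mem_top ℝ _ c)
  exact ⟨hcd, congruent_iff_dist_eq.1 hcongr, f.toIsometryEquiv, hf⟩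
end

section
/- In the Euclidean plane ℝ², let O be a point, r > 0, and let a, b, c be pairwise distinct points with dist(O, a) = dist(O, b) = dist(O, c) = r that do not lie on a line. Let d be the reflection of b across the perpendicular bisector of a and c. Then the line through a and d is parallel to the line through b and c if and only if O lies on the closed segment from a to b or O lies on the closed segment from c to d. -/
open scoped Affine

/-- The orthogonal reflection of the Euclidean plane across the perpendicular bisector
of two points `a` and `c`. -/
noncomputable def perpBisectorReflection (a c : EuclideanSpace ℝ (Fin 2)) :
    EuclideanSpace ℝ (Fin 2) ≃ᵃⁱ[ℝ] EuclideanSpace ℝ (Fin 2) :=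
  haveI : Nonempty (AffineSubspace.perpBisector a c) :=
    (AffineSubspace.perpBisector_nonempty).to_subtype
  EuclideanGeometry.reflection (AffineSubspace.perpBisector a c)

/-!
Write `σ` for the reflection across the perpendicular bisector of `a` and `c`. It exchanges `a` with
`c` and `b` with `d`, so the direction of the line `ad` is the image under the linear part of `σ` of
the direction of `bc`. A linear reflection preserves a line only if that line lies in the mirror or
is orthogonal to it. Here the second case would make `a`, `b`, `c` collinear, and the first says
that the angle at `c` is right, which by Thales' theorem and its converse (as `O` lies in the plane
of `a`, `b`, `c`) means that `ab` is a diameter. Finally `σ` fixes `O`, so the segment `ab` passes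
through `O` if and only if `cd` does.
-/

open AffineSubspace EuclideanGeometry
open scoped RealInnerProductSpace

section LinearAlgebra

variable {k V P : Type*} [DivisionRing k] [AddCommGroup V] [Module k V] [AddTorsor V P] {a b c : P}

theorem affineSpan_triple_eq_top_of_not_collinear (hV : Module.finrank k V = 2)
    (h : ¬Collinear k {a, b, c}) : affineSpan k {a, b, c} = ⊤ := by
  have : FiniteDimensional k V := .of_finrank_eq_succ hV
  have hspan := (affineIndependent_iff_not_collinear_set.2 h)
    |>.affineSpan_eq_top_iff_card_eq_finrank_add_one.2 (by simp [hV])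
  rwa [Matrix.range_cons, Matrix.range_cons_cons_empty, Set.singleton_union] at hspan

theorem collinear_triple_of_vsub_mem_span (h : b -ᵥ c ∈ k ∙ (c -ᵥ a)) :
    Collinear k {a, b, c} := by
  obtain ⟨t, ht⟩ := Submodule.mem_span_singleton.1 h
  refine (collinear_iff_of_mem (p₀ := c) (by simp)).2 ⟨c -ᵥ a, ?_⟩
  simp only [Set.mem_insert_iff, Set.mem_singleton_iff, forall_eq_or_imp, forall_eq]
  exact ⟨⟨-1, by simp⟩, ⟨t, by simp [ht]⟩, ⟨0, by simp⟩⟩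

end LinearAlgebra

section Reflection

variable {𝕜 V P : Type*} [RCLike 𝕜] [NormedAddCommGroup V] [InnerProductSpace 𝕜 V]
  [MetricSpace P] [NormedAddTorsor V P]

theorem span_singleton_reflection_eq_iff {K : Submodule 𝕜 V} [K.HasOrthogonalProjection] {v : V} :
    (𝕜 ∙ K.reflection v) = 𝕜 ∙ v ↔ v ∈ K ∨ v ∈ Kᗮ := by
  constructor
  · intro h
    obtain ⟨t, ht⟩ := Submodule.mem_span_singleton.1 (h ▸ Submodule.mem_span_singleton_self _)
    have hsq : (t * t) • v = (1 : 𝕜) • v := by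
      rw [mul_smul, ht, ← map_smul, ht, K.reflection_reflection, one_smul]
    rcases eq_or_ne v 0 with rfl | hv
    · exact .inl K.zero_mem
    rcases mul_self_eq_one_iff.1 (smul_left_injective 𝕜 hv hsq) with rfl | rfl
    · exact .inl ((K.reflection_eq_self_iff v).1 (by rw [← ht, one_smul]))
    · refine .inr ((Kᗮ.reflection_eq_self_iff v).1 ?_)
      rw [K.reflection_orthogonal_apply, ← ht, neg_one_smul, neg_neg]
  · rintro (h | h)
    · rw [Submodule.reflection_mem_subspace_eq_self h]
    · rw [Submodule.reflection_mem_subspace_orthogonalComplement_eq_neg h,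
        ← Set.neg_singleton, Submodule.span_neg]

theorem reflection_vsub_reflection (s : AffineSubspace 𝕜 P) [Nonempty s]
    [s.direction.HasOrthogonalProjection] (p q : P) :
    reflection s p -ᵥ reflection s q = s.direction.reflection (p -ᵥ q) := by
  rw [reflection_apply, reflection_apply, vadd_vsub_vadd_cancel_right, ← map_sub,
    vsub_sub_vsub_cancel_right]

theorem affineSpan_pair_reflection_parallel_iff {s : AffineSubspace 𝕜 P} [Nonempty s]
    [s.direction.HasOrthogonalProjection] {p q : P} :
    line[𝕜, reflection s p, reflection s q] ∥ line[𝕜, p, q] ↔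
      p -ᵥ q ∈ s.direction ∨ p -ᵥ q ∈ s.directionᗮ := by
  rw [affineSpan_pair_parallel_iff_vectorSpan_eq, vectorSpan_pair, vectorSpan_pair,
    reflection_vsub_reflection, span_singleton_reflection_eq_iff]

end Reflection

section Euclidean

variable {V P : Type*} [NormedAddCommGroup V] [InnerProductSpace ℝ V] [MetricSpace P]
  [NormedAddTorsor V P]

instance nonempty_perpBisector (p q : P) : Nonempty (perpBisector p q) :=
  perpBisector_nonempty.to_subtype

instance hasOrthogonalProjection_direction_perpBisector (p q : P) :
    (perpBisector p q).direction.HasOrthogonalProjection := by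
  rw [direction_perpBisector]
  infer_instance

theorem reflection_perpBisector_left (p q : P) : reflection (perpBisector p q) p = q := by
  have hv : p -ᵥ midpoint ℝ p q ∈ (perpBisector p q).directionᗮ := by
    rw [direction_perpBisector, Submodule.orthogonal_orthogonal, left_vsub_midpoint,
      ← neg_vsub_eq_vsub_rev q p]
    exact Submodule.smul_mem _ _ (neg_mem (Submodule.mem_span_singleton_self _))
  have hreflection := reflection_orthogonal_vadd (midpoint_mem_perpBisector p q) hv
  rwa [vsub_vadd, neg_vsub_eq_vsub_rev, midpoint_vsub_left, ← right_vsub_midpoint,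
    vsub_vadd] at hreflection

theorem reflection_perpBisector_right (p q : P) : reflection (perpBisector p q) q = p :=
  ((reflection_involutive _).eq_iff.1 (reflection_perpBisector_left p q)).symm

theorem center_eq_of_subset_of_mem_affineSpan {ps : Set P} {s₁ s₂ : Sphere P}
    (h₁ : ps ⊆ s₁) (h₂ : ps ⊆ s₂) (hc₁ : s₁.center ∈ affineSpan ℝ ps)
    (hc₂ : s₂.center ∈ affineSpan ℝ ps) : s₁.center = s₂.center := by
  have hmem : s₂.center -ᵥ s₁.center ∈ vectorSpan ℝ ps := by
    rw [← direction_affineSpan]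
    exact vsub_mem_direction hc₂ hc₁
  have horth : vectorSpan ℝ ps ≤ (ℝ ∙ (s₂.center -ᵥ s₁.center))ᗮ := by
    refine Submodule.span_le.2 ?_
    rintro _ ⟨p, hp, q, hq, rfl⟩
    exact Submodule.mem_orthogonal_singleton_iff_inner_right.2
      (inner_vsub_vsub_of_mem_sphere_of_mem_sphere (h₁ hq) (h₁ hp) (h₂ hq) (h₂ hp))
  have hself := Submodule.mem_orthogonal_singleton_iff_inner_right.1 (horth hmem)
  exact (vsub_eq_zero_iff_eq.1 (inner_self_eq_zero.1 hself)).symm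

theorem angle_eq_pi_div_two_iff_isDiameter {s : Sphere P} {p₁ p₂ p₃ : P} (h₁ : p₁ ∈ s)
    (h₂ : p₂ ∈ s) (h₃ : p₃ ∈ s) (hs : s.center ∈ affineSpan ℝ {p₁, p₂, p₃}) :
    ∠ p₁ p₂ p₃ = Real.pi / 2 ↔ s.IsDiameter p₁ p₃ := by
  refine ⟨fun h ↦ ⟨h₁, ?_⟩, fun h ↦ (Sphere.thales_theorem h).2 h₂⟩
  have hdiam := Sphere.isDiameter_ofDiameter p₁ p₃
  have hp₂ := Sphere.angle_eq_pi_div_two_iff_mem_sphere_ofDiameter.1 h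
  have hmid : midpoint ℝ p₁ p₃ ∈ affineSpan ℝ {p₁, p₂, p₃} :=
    affineSpan_mono ℝ (Set.insert_subset_insert (Set.subset_insert p₂ {p₃}))
      (wbtw_midpoint ℝ p₁ p₃).mem_affineSpan
  exact center_eq_of_subset_of_mem_affineSpan (s₁ := .ofDiameter p₁ p₃)
    (by simp [Set.insert_subset_iff, hdiam.left_mem, hp₂, hdiam.right_mem])
    (by simp [Set.insert_subset_iff, h₁, h₂, h₃]) hmid hs

theorem affineSpan_pair_reflection_perpBisector_parallel_iff {a b c : P}
    (hcol : ¬Collinear ℝ {a, b, c}) :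
    line[ℝ, a, reflection (perpBisector a c) b] ∥ line[ℝ, b, c] ↔ ∠ a c b = Real.pi / 2 := by
  have hspan : b -ᵥ c ∉ ℝ ∙ (c -ᵥ a) := mt collinear_triple_of_vsub_mem_span hcol
  calc
    _ ↔ line[ℝ, reflection (perpBisector a c) c, reflection (perpBisector a c) b] ∥
        line[ℝ, c, b] := by
      rw [reflection_perpBisector_right, Set.pair_comm b c]
    _ ↔ c -ᵥ b ∈ (ℝ ∙ (c -ᵥ a))ᗮ ∨ c -ᵥ b ∈ ℝ ∙ (c -ᵥ a) := by
      rw [affineSpan_pair_reflection_parallel_iff, direction_perpBisector,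
        Submodule.orthogonal_orthogonal]
    _ ↔ ⟪a -ᵥ c, b -ᵥ c⟫ = 0 := by
      rw [← neg_vsub_eq_vsub_rev b c, neg_mem_iff, neg_mem_iff, or_iff_left hspan,
        Submodule.mem_orthogonal_singleton_iff_inner_right, ← neg_vsub_eq_vsub_rev a c,
        inner_neg_left, neg_eq_zero]
    _ ↔ ∠ a c b = Real.pi / 2 := InnerProductGeometry.inner_eq_zero_iff_angle_eq_pi_div_two _ _

theorem wbtw_reflection_perpBisector_iff {O a b c : P} (h : dist O a = dist O c) :
    Wbtw ℝ c O (reflection (perpBisector a c) b) ↔ Wbtw ℝ a O b := by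
  have hO : reflection (perpBisector a c) O = O :=
    (reflection_eq_self_iff O).2 (mem_perpBisector_iff_dist_eq.2 h)
  have hmap := (reflection (perpBisector a c)).toAffineEquiv.wbtw_map_iff (x := a) (y := O) (z := b)
  simpa only [AffineIsometryEquiv.coe_toAffineEquiv, reflection_perpBisector_left, hO] using hmap

theorem stmt_13_general {O a b c d : P} {r : ℝ} (hOa : dist O a = r) (hOb : dist O b = r)
    (hOc : dist O c = r) (hO : O ∈ affineSpan ℝ {a, b, c}) (hcol : ¬Collinear ℝ {a, b, c})
    (hd : d = reflection (perpBisector a c) b) :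
    line[ℝ, a, d] ∥ line[ℝ, b, c] ↔ Wbtw ℝ a O b ∨ Wbtw ℝ c O d := by
  subst hd
  let s : Sphere P := ⟨O, r⟩
  have ha : a ∈ s := mem_sphere'.2 hOa
  have hb : b ∈ s := mem_sphere'.2 hOb
  have hc : c ∈ s := mem_sphere'.2 hOc
  calc
    _ ↔ ∠ a c b = Real.pi / 2 := affineSpan_pair_reflection_perpBisector_parallel_iff hcol
    _ ↔ s.IsDiameter a b :=
      angle_eq_pi_div_two_iff_isDiameter ha hc hb (by rwa [Set.pair_comm c b])
    _ ↔ Wbtw ℝ a O b := by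
      simp only [Sphere.isDiameter_iff_mem_and_mem_and_wbtw, ha, hb, true_and, s]
    _ ↔ Wbtw ℝ a O b ∨ Wbtw ℝ c O (reflection (perpBisector a c) b) := by
      rw [wbtw_reflection_perpBisector_iff (hOa.trans hOc.symm), or_self]

end Euclidean

/-- Let `a`, `b`, `c` be pairwise distinct, non-collinear points on the circle of
radius `r` centered at `O` in the Euclidean plane, and let `d` be the reflection of
`b` across the perpendicular bisector of `a` and `c`.  Then the line `ad` is parallel
to the line `bc` if and only if `O` lies on the segment `ab` or on the segment `cd`. -/
theorem stmt_13 (O a b c : EuclideanSpace ℝ (Fin 2)) (r : ℝ) (hr : 0 < r)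
    (hab : a ≠ b) (hbc : b ≠ c) (hac : a ≠ c)
    (hOa : dist O a = r) (hOb : dist O b = r) (hOc : dist O c = r)
    (hcol : ¬ Collinear ℝ ({a, b, c} : Set (EuclideanSpace ℝ (Fin 2))))
    (d : EuclideanSpace ℝ (Fin 2)) (hd : d = perpBisectorReflection a c b) :
    (affineSpan ℝ ({a, d} : Set (EuclideanSpace ℝ (Fin 2))) ∥
      affineSpan ℝ ({b, c} : Set (EuclideanSpace ℝ (Fin 2)))) ↔
    (O ∈ segment ℝ a b ∨ O ∈ segment ℝ c d) := by
  have hO : O ∈ affineSpan ℝ {a, b, c} :=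
    affineSpan_triple_eq_top_of_not_collinear finrank_euclideanSpace_fin hcol ▸ mem_top ℝ _ O
  simpa only [mem_segment_iff_wbtw] using stmt_13_general hOa hOb hOc hO hcol hd
end
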